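/- Let (Ω, 𝓐, P) be a probability space and L : Ω → [0,∞) be integrable with ∫ L dP = 1 and with L log L integrable (convention 0·log 0 = 0). For n ≥ 1 set Φ_n = max(min(L, n), 1/n), c_n = ∫ Φ_n dP, and L_n = Φ_n / c_n. Then c_n → 1 as n → ∞, and L_n log L_n converges to L log L in L¹(P), i.e. ∫ |L_n log L_n − L log L| dP → 0. -/

import Mathlib

open MeasureTheory

/-- The truncation `Φ_n = (L ∧ n) ∨ (1/n)`. -/
noncomputable def Phi {Ω : Type*} (L : Ω → ℝ) (n : ℕ) (x : Ω) : ℝ :=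
  max (min (L x) (n : ℝ)) (1 / (n : ℝ))

/-!
Both `Φ_n` and `Φ_n log Φ_n` are dominated by integrable functions: since `Φ_n ≤ max L 1`, and
`t ↦ t log t` is bounded by `1` in absolute value on `[0, 1]` and increasing on `[1, ∞)`, one has
`|Φ_n| ≤ |L| + 1` and `|Φ_n log Φ_n| ≤ |L log L| + 1`. Dominated convergence for `Φ_n` gives the
limit `c` of the constants `c_n`. Because
`L_n log L_n = c_n⁻¹ (Φ_n log Φ_n) - c_n⁻¹ log c_n Φ_n` and both scalar coefficients converge,
hence are eventually bounded, the normalized functions are dominated as well.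
-/

open Filter Topology

theorem abs_mul_log_le_one {y : ℝ} (hy₀ : 0 ≤ y) (hy₁ : y ≤ 1) : |y * Real.log y| ≤ 1 := by
  rcases hy₀.eq_or_lt with rfl | hy
  · simp
  · simpa only [mul_comm] using (Real.abs_log_mul_self_lt y hy hy₁).le

theorem abs_mul_log_le_of_le_max_one {x y : ℝ} (hy₀ : 0 ≤ y) (hy : y ≤ max x 1) :
    |y * Real.log y| ≤ |x * Real.log x| + 1 := by
  rcases le_or_gt y 1 with hy₁ | hy₁
  · linarith [abs_mul_log_le_one hy₀ hy₁, abs_nonneg (x * Real.log x)]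
  · have hyx : y ≤ x := (le_max_iff.mp hy).resolve_right hy₁.not_ge
    have hexp : Real.exp (-1) ≤ y := (Real.exp_le_one_iff.mpr (by norm_num)).trans hy₁.le
    have hmono : y * Real.log y ≤ x * Real.log x :=
      Real.mul_log_strictMonoOn.monotoneOn hexp (hexp.trans hyx) hyx
    rw [abs_of_nonneg (Real.mul_log_nonneg hy₁.le)]
    linarith [le_abs_self (x * Real.log x)]

theorem div_mul_log_div (x c : ℝ) :
    x / c * Real.log (x / c) = c⁻¹ * (x * Real.log x) - c⁻¹ * Real.log c * x := by
  rcases eq_or_ne c 0 with rfl | hc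
  · simp
  rcases eq_or_ne x 0 with rfl | hx
  · simp
  rw [Real.log_div hx hc]
  ring

section DominatedConvergence

variable {α ι : Type*} [MeasurableSpace α] {μ : Measure α} {l : Filter ι} [l.IsCountablyGenerated]

theorem tendsto_integral_norm_sub_of_dominated_convergence {E : Type*} [NormedAddCommGroup E]
    {F : ι → α → E} {f : α → E} (bound : α → ℝ)
    (hF : ∀ᶠ i in l, AEStronglyMeasurable (F i) μ) (hf : Integrable f μ)
    (hF_le : ∀ᶠ i in l, ∀ᵐ a ∂μ, ‖F i a‖ ≤ bound a) (hbound : Integrable bound μ)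
    (hlim : ∀ᵐ a ∂μ, Tendsto (fun i => F i a) l (𝓝 (f a))) :
    Tendsto (fun i => ∫ a, ‖F i a - f a‖ ∂μ) l (𝓝 0) := by
  rw [← integral_zero α ℝ (μ := μ)]
  refine tendsto_integral_filter_of_dominated_convergence (fun a => bound a + ‖f a‖) ?_ ?_
    (hbound.add hf.norm) ?_
  · filter_upwards [hF] with i hFi using (hFi.sub hf.aestronglyMeasurable).norm
  · filter_upwards [hF_le] with i hi
    filter_upwards [hi] with a ha
    rw [norm_norm]
    exact (norm_sub_le _ _).trans (add_le_add_left ha _)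
  · filter_upwards [hlim] with a ha
    exact tendsto_iff_norm_sub_tendsto_zero.mp ha

theorem tendsto_integral_abs_div_mul_log_div_sub {F : ι → α → ℝ} {f : α → ℝ} {c : ι → ℝ} {c₀ : ℝ}
    {g h : α → ℝ} (hF : ∀ᶠ i in l, AEStronglyMeasurable (F i) μ)
    (hf : Integrable f μ) (hflog : Integrable (fun a => f a * Real.log (f a)) μ)
    (hg : Integrable g μ) (hh : Integrable h μ)
    (hFg : ∀ᶠ i in l, ∀ᵐ a ∂μ, |F i a| ≤ g a)
    (hFh : ∀ᶠ i in l, ∀ᵐ a ∂μ, |F i a * Real.log (F i a)| ≤ h a)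
    (hlim : ∀ᵐ a ∂μ, Tendsto (fun i => F i a) l (𝓝 (f a)))
    (hc : Tendsto c l (𝓝 c₀)) (hc₀ : c₀ ≠ 0) :
    Tendsto (fun i => ∫ a, |F i a / c i * Real.log (F i a / c i)
      - f a / c₀ * Real.log (f a / c₀)| ∂μ) l (𝓝 0) := by
  have hinv : Tendsto (fun i => (c i)⁻¹) l (𝓝 c₀⁻¹) := hc.inv₀ hc₀
  obtain ⟨A, hA⟩ := hinv.abs.isBoundedUnder_le
  obtain ⟨B, hB⟩ := (hinv.mul (hc.log hc₀)).abs.isBoundedUnder_le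
  rw [eventually_map] at hA hB
  simp only [← Real.norm_eq_abs (_ - _)]
  refine tendsto_integral_norm_sub_of_dominated_convergence (fun a => A * h a + B * g a)
    ?_ ?_ ?_ ((hh.const_mul A).add (hg.const_mul B)) ?_
  · filter_upwards [hF] with i hFi
    simpa only [div_eq_mul_inv] using
      Real.continuous_mul_log.comp_aestronglyMeasurable (hFi.mul_const (c i)⁻¹)
  · simp only [div_mul_log_div]
    exact (hflog.const_mul _).sub (hf.const_mul _)
  · filter_upwards [hA, hB, hFg, hFh] with i hAi hBi hgi hhi
    filter_upwards [hgi, hhi] with a hga hha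
    calc |F i a / c i * Real.log (F i a / c i)|
        ≤ |(c i)⁻¹ * (F i a * Real.log (F i a))| + |(c i)⁻¹ * Real.log (c i) * F i a| := by
          rw [div_mul_log_div]
          exact abs_sub _ _
      _ = |(c i)⁻¹| * |F i a * Real.log (F i a)| + |(c i)⁻¹ * Real.log (c i)| * |F i a| := by
          rw [abs_mul (c i)⁻¹, abs_mul _ (F i a)]
      _ ≤ A * h a + B * g a := by
          have hA₀ : 0 ≤ A := (abs_nonneg _).trans hAi
          have hB₀ : 0 ≤ B := (abs_nonneg _).trans hBi
          gcongr
  · filter_upwards [hlim] with a ha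
    exact (Real.continuous_mul_log.tendsto _).comp (ha.div hc hc₀)

end DominatedConvergence

section Truncation

variable {Ω : Type*} {L : Ω → ℝ}

theorem Phi_nonneg (L : Ω → ℝ) (n : ℕ) (x : Ω) : 0 ≤ Phi L n x :=
  le_max_of_le_right (by positivity)

theorem Phi_le_max_one (L : Ω → ℝ) (n : ℕ) (x : Ω) : Phi L n x ≤ max (L x) 1 := by
  have hn : (1 : ℝ) / n ≤ 1 := by
    rw [one_div]
    exact Nat.cast_inv_le_one n
  exact max_le_max (min_le_left _ _) hn

theorem abs_Phi_le (L : Ω → ℝ) (n : ℕ) (x : Ω) : |Phi L n x| ≤ |L x| + 1 := by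
  rw [abs_of_nonneg (Phi_nonneg L n x)]
  refine (Phi_le_max_one L n x).trans (max_le ?_ ?_) <;>
    linarith [le_abs_self (L x), abs_nonneg (L x)]

theorem abs_Phi_mul_log_Phi_le (L : Ω → ℝ) (n : ℕ) (x : Ω) :
    |Phi L n x * Real.log (Phi L n x)| ≤ |L x * Real.log (L x)| + 1 :=
  abs_mul_log_le_of_le_max_one (Phi_nonneg L n x) (Phi_le_max_one L n x)

theorem tendsto_Phi {x : Ω} (hx : 0 ≤ L x) : Tendsto (fun n => Phi L n x) atTop (𝓝 (L x)) := by
  have hmin : Tendsto (fun n : ℕ => min (L x) (n : ℝ)) atTop (𝓝 (L x)) := by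
    refine tendsto_const_nhds.congr' ?_
    filter_upwards [tendsto_natCast_atTop_atTop.eventually_ge_atTop (L x)] with n hn
    rw [min_eq_left hn]
  simpa only [Phi, max_eq_left hx] using hmin.max tendsto_one_div_atTop_nhds_zero_nat

variable [MeasurableSpace Ω] {μ : Measure Ω}

theorem aestronglyMeasurable_Phi (hL : AEStronglyMeasurable L μ) (n : ℕ) :
    AEStronglyMeasurable (Phi L n) μ :=
  (hL.inf aestronglyMeasurable_const).sup aestronglyMeasurable_const

theorem tendsto_integral_Phi [IsFiniteMeasure μ] (hL₀ : 0 ≤ᵐ[μ] L) (hL : Integrable L μ) :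
    Tendsto (fun n => ∫ x, Phi L n x ∂μ) atTop (𝓝 (∫ x, L x ∂μ)) := by
  refine tendsto_integral_of_dominated_convergence (fun x => |L x| + 1)
    (aestronglyMeasurable_Phi hL.aestronglyMeasurable) (hL.abs.add (integrable_const 1))
    (fun n => ae_of_all μ (abs_Phi_le L n)) ?_
  filter_upwards [hL₀] with x hx using tendsto_Phi hx

end Truncation

theorem stmt_10_general {Ω : Type*} [MeasurableSpace Ω] (μ : Measure Ω) [IsFiniteMeasure μ]
    (L : Ω → ℝ) (hL₀ : 0 ≤ᵐ[μ] L) (hL : Integrable L μ) (hL_ne : ¬ L =ᵐ[μ] 0)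
    (hLlog : Integrable (fun x => L x * Real.log (L x)) μ) :
    Tendsto (fun n : ℕ => ∫ x, Phi L n x ∂μ) atTop (𝓝 (∫ x, L x ∂μ)) ∧
    Tendsto (fun n : ℕ =>
        ∫ x, |(Phi L n x / ∫ x', Phi L n x' ∂μ) *
            Real.log (Phi L n x / ∫ x', Phi L n x' ∂μ)
          - (L x / ∫ x', L x' ∂μ) * Real.log (L x / ∫ x', L x' ∂μ)| ∂μ)
      atTop (𝓝 0) := by
  have hc := tendsto_integral_Phi hL₀ hL
  have hc₀ : ∫ x, L x ∂μ ≠ 0 := mt (integral_eq_zero_iff_of_nonneg_ae hL₀ hL).mp hL_ne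
  have hlim : ∀ᵐ x ∂μ, Tendsto (fun n => Phi L n x) atTop (𝓝 (L x)) := by
    filter_upwards [hL₀] with x hx using tendsto_Phi hx
  exact ⟨hc, tendsto_integral_abs_div_mul_log_div_sub
    (.of_forall (aestronglyMeasurable_Phi hL.aestronglyMeasurable)) hL hLlog
    (hL.abs.add (integrable_const 1)) (hLlog.abs.add (integrable_const 1))
    (.of_forall fun n => ae_of_all μ (abs_Phi_le L n))
    (.of_forall fun n => ae_of_all μ (abs_Phi_mul_log_Phi_le L n)) hlim hc hc₀⟩

/-- For an integrable density `L ≥ 0` with `∫ L = 1` and `L log L` integrable,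
setting `Φ_n = (L ∧ n) ∨ (1/n)`, `c_n = ∫ Φ_n` and `L_n = Φ_n / c_n`, one has
`c_n → 1` and `L_n log L_n → L log L` in `L¹(P)`. -/
theorem stmt_10 {Ω : Type*} [MeasurableSpace Ω] (P : Measure Ω) [IsProbabilityMeasure P]
    (L : Ω → ℝ) (hL0 : ∀ x, 0 ≤ L x) (hLint : Integrable L P)
    (hL1 : ∫ x, L x ∂P = 1)
    (hLlog : Integrable (fun x => L x * Real.log (L x)) P) :
    Filter.Tendsto (fun n : ℕ => ∫ x, Phi L n x ∂P) Filter.atTop (nhds 1) ∧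
    Filter.Tendsto (fun n : ℕ =>
        ∫ x, |(Phi L n x / ∫ x', Phi L n x' ∂P) *
            Real.log (Phi L n x / ∫ x', Phi L n x' ∂P)
          - L x * Real.log (L x)| ∂P)
      Filter.atTop (nhds 0) := by
  have hL_ne : ¬ L =ᵐ[P] 0 := fun h => by simp [integral_eq_zero_of_ae h] at hL1
  simpa only [hL1, div_one] using stmt_10_general P L (ae_of_all P hL0) hLint hL_ne hLlog
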